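/- The subgroup of P generated by x = a², y = b², z = (ab)² is isomorphic to ℤ³ (the elements x, y, z pairwise commute and generate a free abelian group of rank 3), and this subgroup has index 4 in P. -/

import Mathlib

noncomputable section

/-- The two relators of the Promislow group `P = ⟨a, b | b⁻¹a²b = a⁻², a⁻¹b²a = b⁻²⟩`,
written as words that equal the identity: `b⁻¹a²ba²` and `a⁻¹b²ab²`. -/
def Prels : Set (FreeGroup (Fin 2)) :=
  {(FreeGroup.of 1)⁻¹ * (FreeGroup.of 0) ^ 2 * (FreeGroup.of 1) * (FreeGroup.of 0) ^ 2,
   (FreeGroup.of 0)⁻¹ * (FreeGroup.of 1) ^ 2 * (FreeGroup.of 0) * (FreeGroup.of 1) ^ 2}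

/-- The Promislow group. -/
abbrev P : Type := PresentedGroup Prels

def pa : P := PresentedGroup.of 0
def pb : P := PresentedGroup.of 1
def px : P := pa ^ 2
def py : P := pb ^ 2
def pz : P := (pa * pb) ^ 2

/-! `P` is the Hantzsche–Wendt crystallographic group: `a` and `b` act on `ℤ³` by screw motions
whose squares, together with that of `ab`, are the translations by `2` along the three axes; this
makes `x`, `y`, `z` independent. Conversely each of `a`, `b`, `ab` inverts the squares of the other
two, so `H = ⟨x, y, z⟩` is abelian and normal. The quotient `P ⧸ H` is generated by two commuting
involutions, and counting the letters `a` and `b` modulo 2 shows that it is `(ℤ/2)²`. -/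

section Group

open Subgroup

variable {G : Type*} [Group G]

lemma semiconjBy_inv_comm {g s : G} : SemiconjBy g s⁻¹ s ↔ SemiconjBy g s s⁻¹ := by
  rw [← SemiconjBy.inv_right_iff, inv_inv]

lemma inv_mul_mul_mul_eq_one_iff_semiconjBy_inv {g s : G} :
    g⁻¹ * s * g * s = 1 ↔ SemiconjBy g s s⁻¹ := by
  rw [SemiconjBy, eq_inv_mul_iff_mul_eq, mul_assoc, mul_assoc, inv_mul_eq_one, eq_comm]

lemma commute_sq_of_semiconjBy_inv {g s : G} (h : SemiconjBy g s s⁻¹) : Commute (g ^ 2) s := by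
  rw [pow_two]
  exact (semiconjBy_inv_comm.2 h).mul_left h

lemma commute_of_sq_eq_one {a b : G} (ha : a ^ 2 = 1) (hb : b ^ 2 = 1) (hab : (a * b) ^ 2 = 1) :
    Commute a b := by
  rw [pow_two] at ha hb hab
  calc a * b = (a * b)⁻¹ := eq_inv_of_mul_eq_one_left hab
    _ = b⁻¹ * a⁻¹ := mul_inv_rev a b
    _ = b * a := by rw [inv_eq_of_mul_eq_one_left ha, inv_eq_of_mul_eq_one_left hb]

lemma mem_normalizer_closure_of_semiconjBy {T : Set G} {g : G}
    (h : ∀ t ∈ T, Commute g t ∨ SemiconjBy g t t⁻¹) :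
    g ∈ normalizer (closure T : Set G) := by
  have conj_eq (t : G) (ht : t ∈ T) : g * t * g⁻¹ = t ∨ g * t * g⁻¹ = t⁻¹ :=
    (h t ht).imp (fun h ↦ mul_inv_eq_of_eq_mul h.eq) (fun h ↦ mul_inv_eq_of_eq_mul h.eq)
  rw [mem_normalizer_iff_map_conj_eq, MonoidHom.map_closure]
  apply le_antisymm <;> rw [closure_le]
  · rintro _ ⟨t, ht, rfl⟩
    have t_mem := subset_closure ht
    rcases conj_eq t ht with h | h <;> simpa [h] using t_mem
  · intro t ht
    have conj_mem := subset_closure (Set.mem_image_of_mem (MulAut.conj g).toMonoidHom ht)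
    rcases conj_eq t ht with h | h <;> simpa [h] using conj_mem

/-- The homomorphism `ℤ² → G`, `(m, n) ↦ a ^ m * b ^ n`, given by a commuting pair. -/
def zpowMulZpowHom {a b : G} (h : Commute a b) : Multiplicative ℤ × Multiplicative ℤ →* G :=
  (zpowersHom G a).noncommCoprod (zpowersHom G b) fun m n ↦ h.zpow_zpow m.toAdd n.toAdd

lemma range_zpowMulZpowHom {a b : G} (h : Commute a b) :
    (zpowMulZpowHom h).range = closure {a, b} :=
  calc (zpowMulZpowHom h).range = zpowers a ⊔ zpowers b := MonoidHom.noncommCoprod_range _ _ _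
    _ = closure {a, b} := by
      rw [zpowers_eq_closure, zpowers_eq_closure, ← Subgroup.closure_union, Set.singleton_union]

lemma mem_closure_pair_of_commute {a b : G} (h : Commute a b) {g : G} :
    g ∈ closure {a, b} ↔ ∃ m n : ℤ, a ^ m * b ^ n = g := by
  rw [← range_zpowMulZpowHom h]
  exact Prod.exists

lemma nonempty_closure_mulEquiv_int_prod {x y z : G} (hxy : Commute x y) (hxz : Commute x z)
    (hyz : Commute y z)
    (independent : ∀ l m n : ℤ, x ^ l * (y ^ m * z ^ n) = 1 → l = 0 ∧ m = 0 ∧ n = 0) :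
    Nonempty (closure {x, y, z} ≃* Multiplicative (ℤ × ℤ × ℤ)) := by
  let xyzHom := (zpowersHom G x).noncommCoprod (zpowMulZpowHom hyz) fun l mn ↦
    (hxy.zpow_zpow l.toAdd mn.1.toAdd).mul_right (hxz.zpow_zpow l.toAdd mn.2.toAdd)
  have range_eq : xyzHom.range = closure {x, y, z} :=
    calc xyzHom.range = zpowers x ⊔ (zpowMulZpowHom hyz).range :=
          MonoidHom.noncommCoprod_range _ _ _
      _ = closure {x, y, z} := by
          rw [range_zpowMulZpowHom, zpowers_eq_closure, ← Subgroup.closure_union,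
            Set.singleton_union]
  have injective : Function.Injective xyzHom := by
    rw [injective_iff_map_eq_one]
    rintro ⟨l, m, n⟩ h
    obtain ⟨hl, hm, hn⟩ := independent l.toAdd m.toAdd n.toAdd h
    exact Prod.ext hl (Prod.ext hm hn)
  let splitting : Multiplicative (ℤ × ℤ × ℤ) ≃*
      Multiplicative ℤ × Multiplicative ℤ × Multiplicative ℤ :=
    (MulEquiv.prodMultiplicative ℤ (ℤ × ℤ)).trans
      ((MulEquiv.refl _).prodCongr (MulEquiv.prodMultiplicative ℤ ℤ))
  exact ⟨(splitting.trans ((MonoidHom.ofInjective injective).trans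
    (MulEquiv.subgroupCongr range_eq))).symm⟩

end Group

/-- The pair `(a, b)` satisfies the defining relations of the Promislow group, written as: `b`
inverts `a²` and `a` inverts `b²` under conjugation. Pairs in a group `G` with this property
correspond to homomorphisms `P →* G`, see `PromislowPair.lift`. -/
structure PromislowPair {G : Type*} [Group G] (a b : G) : Prop where
  semiconjBy_sq_left : SemiconjBy b (a ^ 2) (a ^ 2)⁻¹
  semiconjBy_sq_right : SemiconjBy a (b ^ 2) (b ^ 2)⁻¹

/-- The subgroup generated by `a²`, `b²` and `(ab)²`; for `(a, b) = (pa, pb)` it is the subgroup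
`⟨x, y, z⟩` of the Promislow group. -/
def squareSubgroup {G : Type*} [Group G] (a b : G) : Subgroup G :=
  Subgroup.closure {a ^ 2, b ^ 2, (a * b) ^ 2}

namespace PromislowPair

open Subgroup

variable {G : Type*} [Group G] {a b : G}

lemma commute_sq_sq (h : PromislowPair a b) : Commute (a ^ 2) (b ^ 2) :=
  commute_sq_of_semiconjBy_inv h.semiconjBy_sq_right

lemma semiconjBy_mul_sq_left (h : PromislowPair a b) :
    SemiconjBy a ((a * b) ^ 2) ((a * b) ^ 2)⁻¹ := by
  have sq_mul : a ^ 2 * b = b * (a ^ 2)⁻¹ :=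
    (semiconjBy_inv_comm.2 h.semiconjBy_sq_left).eq.symm
  have sq_mul_inv : b ^ 2 * a⁻¹ = a⁻¹ * (b ^ 2)⁻¹ :=
    h.semiconjBy_sq_right.inv_symm_left.eq.symm
  calc a * (a * b) ^ 2 = a ^ 2 * b * (a * b) := by simp only [pow_two, mul_assoc]
    _ = b⁻¹ * (b ^ 2 * a⁻¹) * b := by rw [sq_mul]; group
    _ = ((a * b) ^ 2)⁻¹ * a := by rw [sq_mul_inv, pow_two (a * b)]; group

lemma semiconjBy_mul_sq_right (h : PromislowPair a b) :
    SemiconjBy b ((a * b) ^ 2) ((a * b) ^ 2)⁻¹ := by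
  have h_inv : SemiconjBy a⁻¹ ((a * b) ^ 2) ((a * b) ^ 2)⁻¹ :=
    (semiconjBy_inv_comm.2 h.semiconjBy_mul_sq_left).inv_symm_left
  simpa only [inv_mul_cancel_left] using h_inv.mul_left (Commute.self_pow (a * b) 2)

lemma mul_right (h : PromislowPair a b) : PromislowPair a (a * b) where
  semiconjBy_sq_left := SemiconjBy.mul_left (Commute.self_pow a 2).inv_right h.semiconjBy_sq_left
  semiconjBy_sq_right := h.semiconjBy_mul_sq_left

lemma right_mul (h : PromislowPair a b) : PromislowPair b (a * b) where
  semiconjBy_sq_left := h.semiconjBy_sq_right.mul_left (Commute.self_pow b 2)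
  semiconjBy_sq_right := h.semiconjBy_mul_sq_right

lemma normal_squareSubgroup (h : PromislowPair a b) (generate : closure {a, b} = ⊤) :
    (squareSubgroup a b).Normal := by
  rw [← normalizer_eq_top_iff, eq_top_iff, ← generate, closure_le]
  rintro g (rfl | rfl) <;> refine mem_normalizer_closure_of_semiconjBy ?_
  · rintro _ (rfl | rfl | rfl)
    exacts [.inl (Commute.self_pow g 2), .inr h.semiconjBy_sq_right, .inr h.semiconjBy_mul_sq_left]
  · rintro _ (rfl | rfl | rfl)
    exacts [.inr h.semiconjBy_sq_left, .inl (Commute.self_pow g 2), .inr h.semiconjBy_mul_sq_right]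

lemma exists_zpow_mul_zpow_inv_mul_mem_squareSubgroup (h : PromislowPair a b)
    (generate : closure {a, b} = ⊤) (g : G) :
    ∃ m n : ℤ, (a ^ m * b ^ n)⁻¹ * g ∈ squareSubgroup a b := by
  have := h.normal_squareSubgroup generate
  let π := QuotientGroup.mk' (squareSubgroup a b)
  have π_eq_one {t : G} (ht : t ∈ ({a ^ 2, b ^ 2, (a * b) ^ 2} : Set G)) : π t = 1 :=
    (QuotientGroup.eq_one_iff t).2 (subset_closure ht)
  have commute : Commute (π a) (π b) := by
    apply commute_of_sq_eq_one <;> simp only [← map_mul, ← map_pow] <;> exact π_eq_one (by simp)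
  have π_mem : π g ∈ closure {π a, π b} := by
    rw [← Set.image_pair, ← MonoidHom.map_closure, generate]
    exact mem_map_of_mem π (mem_top g)
  obtain ⟨m, n, hmn⟩ := (mem_closure_pair_of_commute commute).1 π_mem
  refine ⟨m, n, QuotientGroup.eq.1 ?_⟩
  simp only [← map_zpow, ← map_mul] at hmn
  exact hmn

/-- The homomorphism from the Promislow group that sends its generators to the pair `(a, b)`. -/
def lift (h : PromislowPair a b) : P →* G :=
  PresentedGroup.toGroup (f := ![a, b]) (by
    rintro _ (rfl | rfl) <;>
      simp only [map_mul, map_inv, map_pow, FreeGroup.lift_apply_of, Matrix.cons_val_zero,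
        Matrix.cons_val_one]
    · exact inv_mul_mul_mul_eq_one_iff_semiconjBy_inv.2 h.semiconjBy_sq_left
    · exact inv_mul_mul_mul_eq_one_iff_semiconjBy_inv.2 h.semiconjBy_sq_right)

@[simp]
lemma lift_pa (h : PromislowPair a b) : h.lift pa = a := by
  simp [lift, pa]

@[simp]
lemma lift_pb (h : PromislowPair a b) : h.lift pb = b := by
  simp [lift, pb]

end PromislowPair

lemma promislowPair_pa_pb : PromislowPair pa pb where
  semiconjBy_sq_left :=
    inv_mul_mul_mul_eq_one_iff_semiconjBy_inv.1 (PresentedGroup.one_of_mem (.inl rfl))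
  semiconjBy_sq_right :=
    inv_mul_mul_mul_eq_one_iff_semiconjBy_inv.1 (PresentedGroup.one_of_mem (.inr rfl))

lemma closure_pa_pb : Subgroup.closure {pa, pb} = (⊤ : Subgroup P) := by
  rw [← PresentedGroup.closure_range_of Prels, ← Matrix.range_cons_cons_empty pa pb ![]]
  congr 2
  ext i
  fin_cases i <;> rfl

/-- The screw motion of `ℤ³` along the first axis by which `a` acts. The coordinates are twice those
of the usual crystallographic description, so that the half-unit shifts become integral. -/
def screwA : Equiv.Perm (ℤ × ℤ × ℤ) where
  toFun p := (p.1 + 1, -p.2.1, 1 - p.2.2)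
  invFun p := (p.1 - 1, -p.2.1, 1 - p.2.2)
  left_inv p := by simp
  right_inv p := by simp

/-- The screw motion of `ℤ³` along the second axis by which `b` acts. -/
def screwB : Equiv.Perm (ℤ × ℤ × ℤ) where
  toFun p := (-p.1, p.2.1 + 1, -p.2.2)
  invFun p := (-p.1, p.2.1 - 1, -p.2.2)
  left_inv p := by simp
  right_inv p := by simp

open Multiplicative (ofAdd toAdd)

/-- The homomorphism that sends a vector to the translation of `ℤ³` by it. -/
def translation : Multiplicative (ℤ × ℤ × ℤ) →* Equiv.Perm (ℤ × ℤ × ℤ) :=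
  Equiv.constVAddHom (ℤ × ℤ × ℤ) (ℤ × ℤ × ℤ)

@[simp]
lemma translation_apply (v : Multiplicative (ℤ × ℤ × ℤ)) (p : ℤ × ℤ × ℤ) :
    translation v p = toAdd v + p :=
  rfl

lemma screwA_sq : screwA ^ 2 = translation (ofAdd (2, 0, 0)) := by
  ext p
  · change p.1 + 1 + 1 = 2 + p.1
    ring
  · simp [screwA, pow_two]
  · simp [screwA, pow_two]

lemma screwB_sq : screwB ^ 2 = translation (ofAdd (0, 2, 0)) := by
  ext p
  · simp [screwB, pow_two]
  · change p.2.1 + 1 + 1 = 2 + p.2.1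
    ring
  · simp [screwB, pow_two]

lemma screwA_mul_screwB_sq : (screwA * screwB) ^ 2 = translation (ofAdd (0, 0, 2)) := by
  ext p
  · simp [screwA, screwB, pow_two]
  · simp [screwA, screwB, pow_two]
  · change 1 - -(1 - -p.2.2) = 2 + p.2.2
    ring

lemma promislowPair_screwA_screwB : PromislowPair screwA screwB where
  semiconjBy_sq_left := by
    rw [screwA_sq, ← map_inv, ← ofAdd_neg]
    ext p <;> simp [screwB, add_comm]
  semiconjBy_sq_right := by
    rw [screwB_sq, ← map_inv, ← ofAdd_neg]
    ext p <;> simp [screwA, add_comm]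

/-- The action of the Promislow group on `ℤ³` by screw motions. -/
def screwHom : P →* Equiv.Perm (ℤ × ℤ × ℤ) :=
  promislowPair_screwA_screwB.lift

lemma screwHom_zpow_mul_zpow_mul_zpow (l m n : ℤ) :
    screwHom (px ^ l * (py ^ m * pz ^ n)) = translation (ofAdd (2 * l, 2 * m, 2 * n)) := by
  have screwHom_px : screwHom px = translation (ofAdd (2, 0, 0)) := by
    rw [px, map_pow, screwHom, PromislowPair.lift_pa, screwA_sq]
  have screwHom_py : screwHom py = translation (ofAdd (0, 2, 0)) := by
    rw [py, map_pow, screwHom, PromislowPair.lift_pb, screwB_sq]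
  have screwHom_pz : screwHom pz = translation (ofAdd (0, 0, 2)) := by
    rw [pz, map_pow, map_mul, screwHom, PromislowPair.lift_pa, PromislowPair.lift_pb,
      screwA_mul_screwB_sq]
  simp only [map_mul, map_zpow, screwHom_px, screwHom_py, screwHom_pz]
  simp only [← map_zpow, ← map_mul, ← ofAdd_zsmul, ← ofAdd_add]
  congr 2
  simp [mul_comm]

lemma eq_zero_of_zpow_mul_zpow_mul_zpow_eq_one {l m n : ℤ}
    (h : px ^ l * (py ^ m * pz ^ n) = 1) : l = 0 ∧ m = 0 ∧ n = 0 := by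
  have h_translation : translation (ofAdd (2 * l, 2 * m, 2 * n)) = 1 := by
    rw [← screwHom_zpow_mul_zpow_mul_zpow, h, map_one]
  simpa using congrArg (· 0) h_translation

lemma promislowPair_zmod_two :
    PromislowPair (ofAdd ((1, 0) : ZMod 2 × ZMod 2)) (ofAdd ((0, 1) : ZMod 2 × ZMod 2)) :=
  ⟨rfl, rfl⟩

/-- The parities of the exponent sums of `a` and `b` in an element of the Promislow group. -/
def parityHom : P →* Multiplicative (ZMod 2 × ZMod 2) :=
  promislowPair_zmod_two.lift

lemma parityHom_zpow_mul_zpow (m n : ℤ) : parityHom (pa ^ m * pb ^ n) = ofAdd (↑m, ↑n) := by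
  rw [map_mul, map_zpow, map_zpow, parityHom, PromislowPair.lift_pa, PromislowPair.lift_pb,
    ← ofAdd_zsmul, ← ofAdd_zsmul, ← ofAdd_add]
  simp

lemma parityHom_surjective : Function.Surjective parityHom := by
  intro v
  obtain ⟨m, hm⟩ := ZMod.intCast_surjective v.toAdd.1
  obtain ⟨n, hn⟩ := ZMod.intCast_surjective v.toAdd.2
  exact ⟨pa ^ m * pb ^ n, by rw [parityHom_zpow_mul_zpow, hm, hn]; rfl⟩

lemma ker_parityHom : parityHom.ker = squareSubgroup pa pb := by
  have squareSubgroup_le : squareSubgroup pa pb ≤ parityHom.ker := by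
    have sq_eq_one : ∀ v : Multiplicative (ZMod 2 × ZMod 2), v ^ 2 = 1 := by decide
    rw [squareSubgroup, Subgroup.closure_le]
    rintro _ (rfl | rfl | rfl) <;> exact (map_pow parityHom _ 2).trans (sq_eq_one _)
  refine le_antisymm (fun g hg ↦ ?_) squareSubgroup_le
  obtain ⟨m, n, hmn⟩ :=
    promislowPair_pa_pb.exists_zpow_mul_zpow_inv_mul_mem_squareSubgroup closure_pa_pb g
  have parity_eq_one : parityHom (pa ^ m * pb ^ n) = 1 := by
    rw [← MonoidHom.mem_ker]
    exact inv_mem_iff.1 ((Subgroup.mul_mem_cancel_right _ hg).1 (squareSubgroup_le hmn))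
  have zpow_mul_zpow_mem : pa ^ m * pb ^ n ∈ squareSubgroup pa pb := by
    rw [parityHom_zpow_mul_zpow, ofAdd_eq_one, Prod.mk_eq_zero] at parity_eq_one
    obtain ⟨k, rfl⟩ := (ZMod.intCast_eq_zero_iff_even.1 parity_eq_one.1).two_dvd
    obtain ⟨l, rfl⟩ := (ZMod.intCast_eq_zero_iff_even.1 parity_eq_one.2).two_dvd
    rw [zpow_mul, zpow_mul]
    exact mul_mem (zpow_mem (Subgroup.subset_closure (by simp [zpow_ofNat])) k)
      (zpow_mem (Subgroup.subset_closure (by simp [zpow_ofNat])) l)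
  exact (Subgroup.mul_mem_cancel_left _ (inv_mem zpow_mul_zpow_mem)).1 hmn

lemma index_squareSubgroup_pa_pb : (squareSubgroup pa pb).index = 4 := by
  rw [← ker_parityHom, Subgroup.index_ker, MonoidHom.range_eq_top.2 parityHom_surjective,
    Subgroup.card_top]
  simp [Nat.card_eq_fintype_card]

/-- The subgroup of `P` generated by `x = a²`, `y = b²`, `z = (ab)²` is free abelian of
rank 3 (the generators pairwise commute) and has index 4 in `P`. -/
theorem subgroup_xyz_free_abelian_of_index_four :
    Commute px py ∧ Commute px pz ∧ Commute py pz ∧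
    Nonempty ((Subgroup.closure {px, py, pz} : Subgroup P) ≃* Multiplicative (ℤ × ℤ × ℤ)) ∧
    (Subgroup.closure {px, py, pz} : Subgroup P).index = 4 := by
  have hxy : Commute px py := promislowPair_pa_pb.commute_sq_sq
  have hxz : Commute px pz := promislowPair_pa_pb.mul_right.commute_sq_sq
  have hyz : Commute py pz := promislowPair_pa_pb.right_mul.commute_sq_sq
  exact ⟨hxy, hxz, hyz,
    nonempty_closure_mulEquiv_int_prod hxy hxz hyz
      fun _ _ _ ↦ eq_zero_of_zpow_mul_zpow_mul_zpow_eq_one,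
    index_squareSubgroup_pa_pb⟩
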